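/- Let Ω ⊂ ℝ² be a nonempty bounded open set, let J := [[0,−1],[1,0]] be the rotation by π/2, and let F, a₀, a₁ ∈ ℝ^{2×2} with a₀ ≠ a₁ and a := a₁ − a₀. Then the infimum, taken over all v ∈ C_c^∞(Ω; ℝ²), of ∫_Ω dist²(F + Dv(x)·J, {a₀, a₁}) dx equals |Ω| · min_{θ ∈ [0,1]} ( ‖F − a_θ‖² + θ(1−θ)·min_{ξ ∈ S¹} ‖aξ‖² ), where Dv(x) denotes the Jacobian matrix of v at x. Note that every matrix field of the form F + Dv(x)·J is divergence-free (row-wise). -/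

import Mathlib

open MeasureTheory

/-- Squared Frobenius norm of a matrix. -/
def frob2 (M : Matrix (Fin 2) (Fin 2) ℝ) : ℝ := ∑ i, ∑ j, (M i j) ^ 2

/-- The Jacobian matrix of `v` at `x`, entry `(i,j)` is `∂ vᵢ / ∂ xⱼ`. -/
noncomputable def jacobian (v : (Fin 2 → ℝ) → (Fin 2 → ℝ)) (x : Fin 2 → ℝ) :
    Matrix (Fin 2) (Fin 2) ℝ :=
  Matrix.of fun i j => fderiv ℝ v x (Pi.single j 1) i

/-!
Lower bound. The determinant and the linear functions of `Dv` are null Lagrangians: their integrals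
vanish for compactly supported `v`. So it is enough to bound the two-well energy density at `F + G`
from below by `M + ⟨C, G⟩ + c det G`. Write `a = a₁ - a₀`, let `θ` attain `M`, and let `ξ` attain
`H = min ‖aξ‖²`. Since `ξ` is a minimizer, in the orthonormal frame `(ξ, Jξ)` the columns of `a` are
orthogonal and the first is the shorter one. Completing squares then gives
`‖G - τ a‖² ≥ c det G + τ² H` for all `τ`. Expanding `‖F + G - a_χ‖²` around `a_θ` for `χ = 0, 1`,
with `τ = χ - θ`, leaves exactly the first-order optimality condition for `θ`.

Upper bound. With `P = (aξ) ⊗ ξ` the matrix `a - P` is of the form `(w ⊗ ν) J`, so `F` can be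
laminated between `F + (1 - θ)(a - P)` and `F - θ(a - P)`, at cost
`‖F - a_θ‖² + θ(1 - θ)‖P‖²` with `‖P‖² = H`. The laminate is realized by cut-offs of
`ε ψ(n·x/ε + s) w`. Choosing the phase `s` no worse than average replaces the weak convergence of
rapidly oscillating functions by Fubini's theorem.
-/

open Filter Topology TopologicalSpace
open scoped ContDiff Distributions

section Averaging

theorem isProbabilityMeasure_restrict_Ioc_zero_one :
    IsProbabilityMeasure (volume.restrict (Set.Ioc (0 : ℝ) 1)) :=
  ⟨by simp⟩

variable {α : Type*} [MeasurableSpace α] {ν : Measure α} [IsFiniteMeasure ν]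

theorem tendsto_integral_continuous_comp {V : Type*} [NormedAddCommGroup V] [ProperSpace V]
    {q : V → ℝ} (hq : Continuous q) {f : ℕ → α → V} {g : α → V} {C : ℝ}
    (hf : ∀ k, AEStronglyMeasurable (f k) ν) (hC : ∀ k, ∀ᵐ x ∂ν, ‖f k x‖ ≤ C)
    (hlim : ∀ᵐ x ∂ν, Tendsto (fun k ↦ f k x) atTop (𝓝 (g x))) :
    Tendsto (fun k ↦ ∫ x, q (f k x) ∂ν) atTop (𝓝 (∫ x, q (g x) ∂ν)) := by
  obtain ⟨B, hB⟩ :=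
    (isCompact_closedBall (0 : V) C).exists_bound_of_continuousOn hq.continuousOn
  refine tendsto_integral_of_dominated_convergence (fun _ ↦ B)
    (fun k ↦ hq.comp_aestronglyMeasurable (hf k)) (integrable_const B) (fun k ↦ ?_) ?_
  · filter_upwards [hC k] with x hx using hB _ (mem_closedBall_zero_iff.2 hx)
  · filter_upwards [hlim] with x hx using (hq.tendsto _).comp hx

theorem exists_integral_comp_add_le_of_periodic {Ψ : α × ℝ → ℝ} (hΨ : Measurable Ψ) {C : ℝ}
    (hC : ∀ z, ‖Ψ z‖ ≤ C) (hper : ∀ x, Function.Periodic (fun t ↦ Ψ (x, t)) 1) {l : α → ℝ}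
    (hl : Measurable l) :
    ∃ s, ∫ x, Ψ (x, l x + s) ∂ν ≤ ∫ z, Ψ z ∂(ν.prod (volume.restrict (Set.Ioc 0 1))) := by
  have shift (x : α) :
      ∫ t in Set.Ioc (0 : ℝ) 1, Ψ (x, t) = ∫ t in Set.Ioc (0 : ℝ) 1, Ψ (x, l x + t) := by
    have h := (hper x).intervalIntegral_add_eq (l x) 0
    rw [zero_add] at h
    rw [← intervalIntegral.integral_of_le zero_le_one,
      ← intervalIntegral.integral_of_le zero_le_one,
      intervalIntegral.integral_comp_add_left (fun t ↦ Ψ (x, t)), add_zero, h]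
  have : IsProbabilityMeasure (volume.restrict (Set.Ioc (0 : ℝ) 1)) :=
    isProbabilityMeasure_restrict_Ioc_zero_one
  have hint : Integrable (fun z : α × ℝ ↦ Ψ (z.1, l z.1 + z.2))
      (ν.prod (volume.restrict (Set.Ioc 0 1))) :=
    .of_bound (hΨ.comp (by fun_prop)).aestronglyMeasurable C (.of_forall fun z ↦ hC _)
  -- By periodicity, averaging the left-hand side over `s ∈ (0, 1]` gives the right-hand side.
  obtain ⟨s, hs⟩ := exists_le_integral hint.integral_prod_right
  refine ⟨s, hs.trans_eq ?_⟩
  rw [integral_prod _ (.of_bound hΨ.aestronglyMeasurable C (.of_forall hC)),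
    ← integral_integral_swap hint]
  exact integral_congr_ae (.of_forall fun x ↦ (shift x).symm)

end Averaging

section Profiles

theorem periodic_deriv {f : ℝ → ℝ} {T : ℝ} (hf : Function.Periodic f T) :
    Function.Periodic (deriv f) T := fun t ↦ by
  rw [← deriv_comp_add_const, funext hf]

theorem exists_contDiff_periodic_deriv_eq {g : ℝ → ℝ} (hg : ContDiff ℝ ∞ g) {T : ℝ}
    (hper : Function.Periodic g T) (hmean : ∫ t in (0 : ℝ)..T, g t = 0) :
    ∃ ψ : ℝ → ℝ, ContDiff ℝ ∞ ψ ∧ Function.Periodic ψ T ∧ deriv ψ = g := by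
  have hgi (a b : ℝ) : IntervalIntegrable g volume a b := hg.continuous.intervalIntegrable a b
  have hderiv (t : ℝ) : HasDerivAt (fun u ↦ ∫ s in (0 : ℝ)..u, g s) (g t) t :=
    intervalIntegral.integral_hasDerivAt_right (hgi _ _)
      (hg.continuous.stronglyMeasurableAtFilter _ _) hg.continuous.continuousAt
  have hderiv_eq : deriv (fun u ↦ ∫ s in (0 : ℝ)..u, g s) = g := funext fun t ↦ (hderiv t).deriv
  refine ⟨_, contDiff_infty_iff_deriv.2 ⟨fun t ↦ (hderiv t).differentiableAt, ?_⟩,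
    fun t ↦ ?_, hderiv_eq⟩
  · rwa [hderiv_eq]
  · have h := hper.intervalIntegral_add_eq t 0
    rw [zero_add, hmean] at h
    have hadd := intervalIntegral.integral_add_adjacent_intervals (hgi 0 t) (hgi t (t + T))
    rw [h, add_zero] at hadd
    exact hadd.symm

theorem tendsto_smoothTransition_natCast_mul_sub {c : ℝ} (hc : 0 ≤ c) (x : ℝ) :
    Tendsto (fun k : ℕ ↦ Real.smoothTransition (k * x - c)) atTop
      (𝓝 ((Set.Ioi 0).indicator 1 x)) := by
  rcases le_or_gt x 0 with hx | hx
  · rw [Set.indicator_of_notMem (Set.notMem_Ioi.2 hx)]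
    refine tendsto_const_nhds.congr fun k ↦ (Real.smoothTransition.zero_of_nonpos ?_).symm
    linarith [mul_nonpos_of_nonneg_of_nonpos (Nat.cast_nonneg (α := ℝ) k) hx]
  · rw [Set.indicator_of_mem (Set.mem_Ioi.2 hx)]
    refine tendsto_const_nhds.congr' ?_
    filter_upwards [(tendsto_natCast_atTop_atTop.atTop_mul_const hx).eventually_ge_atTop (1 + c)]
      with k hk using (Real.smoothTransition.one_of_one_le (by linarith)).symm

theorem cos_lt_cos_pi_mul_iff {θ t : ℝ} (hθ : θ ∈ Set.Icc (0 : ℝ) 1) (ht : t ∈ Set.Ioc (0 : ℝ) 1) :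
    Real.cos (Real.pi * θ) < Real.cos (Real.pi * (2 * t - 1)) ↔
      t ∈ Set.Ioo ((1 - θ) / 2) ((1 + θ) / 2) := by
  have habs : |2 * t - 1| ≤ 1 := abs_le.2 ⟨by linarith [ht.1], by linarith [ht.2]⟩
  rw [← Real.cos_abs (Real.pi * (2 * t - 1)), abs_mul, abs_of_pos Real.pi_pos,
    Real.strictAntiOn_cos.lt_iff_gt
      ⟨mul_nonneg Real.pi_pos.le hθ.1, mul_le_of_le_one_right Real.pi_pos.le hθ.2⟩
      ⟨by positivity, mul_le_of_le_one_right Real.pi_pos.le habs⟩,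
    mul_lt_mul_iff_right₀ Real.pi_pos, abs_lt, Set.mem_Ioo]
  constructor <;> rintro ⟨h₁, h₂⟩ <;> constructor <;> linarith

theorem exists_periodic_tendsto_indicator {θ : ℝ} (hθ : θ ∈ Set.Icc (0 : ℝ) 1) :
    ∃ χ : ℕ → ℝ → ℝ, (∀ k, ContDiff ℝ ∞ (χ k)) ∧ (∀ k, Function.Periodic (χ k) 1) ∧
      (∀ k t, χ k t ∈ Set.Icc 0 1) ∧ ∀ t ∈ Set.Ioc (0 : ℝ) 1,
        Tendsto (fun k ↦ χ k t) atTop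
          (𝓝 ((Set.Ioo ((1 - θ) / 2) ((1 + θ) / 2)).indicator 1 t)) := by
  -- The superlevel sets of the 1-periodic function `cos (π (2 t - 1))` are intervals around `1/2`.
  refine ⟨fun k t ↦ Real.smoothTransition
    (k * (Real.cos (Real.pi * (2 * t - 1)) - Real.cos (Real.pi * θ))), fun k ↦ ?_, fun k t ↦ ?_,
    fun k t ↦ ⟨Real.smoothTransition.nonneg _, Real.smoothTransition.le_one _⟩, fun t ht ↦ ?_⟩
  · exact Real.smoothTransition.contDiff.comp (by fun_prop)
  · have h : Real.pi * (2 * (t + 1) - 1) = Real.pi * (2 * t - 1) + 2 * Real.pi := by ring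
    simp only [h, Real.cos_add_two_pi]
  · have h := tendsto_smoothTransition_natCast_mul_sub le_rfl
      (Real.cos (Real.pi * (2 * t - 1)) - Real.cos (Real.pi * θ))
    simpa only [sub_zero, Set.indicator_apply, Set.mem_Ioi, sub_pos, cos_lt_cos_pi_mul_iff hθ ht,
      Pi.one_apply] using h

theorem integral_comp_indicator_Ioo_sub {θ : ℝ} (hθ : θ ∈ Set.Icc (0 : ℝ) 1) (r : ℝ → ℝ) :
    ∫ t in Set.Ioc (0 : ℝ) 1, r ((Set.Ioo ((1 - θ) / 2) ((1 + θ) / 2)).indicator 1 t - θ) =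
      θ * r (1 - θ) + (1 - θ) * r (-θ) := by
  set S := Set.Ioo ((1 - θ) / 2) ((1 + θ) / 2)
  have hS : S ⊆ Set.Ioc 0 1 := fun t ht ↦
    ⟨by linarith [ht.1, hθ.2], by linarith [ht.2, hθ.2]⟩
  have hvol : (volume.restrict (Set.Ioc (0 : ℝ) 1)).real S = θ := by
    rw [measureReal_restrict_apply measurableSet_Ioo, Set.inter_eq_left.2 hS,
      Real.volume_real_Ioo_of_le (by linarith [hθ.1])]
    ring
  have hr (t : ℝ) :
      r (S.indicator 1 t - θ) = r (-θ) + S.indicator (fun _ ↦ r (1 - θ) - r (-θ)) t := by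
    by_cases ht : t ∈ S <;> simp [ht]
  simp_rw [hr]
  rw [integral_add (integrable_const _) ((integrable_const _).indicator measurableSet_Ioo),
    integral_indicator_const _ measurableSet_Ioo, hvol, integral_const]
  simp only [measureReal_restrict_apply_univ, Real.volume_real_Ioc_of_le zero_le_one, smul_eq_mul]
  ring

theorem exists_periodic_tendsto_deriv {θ : ℝ} (hθ : θ ∈ Set.Icc (0 : ℝ) 1) :
    ∃ ψ : ℕ → ℝ → ℝ, (∀ k, ContDiff ℝ ∞ (ψ k)) ∧ (∀ k, Function.Periodic (ψ k) 1) ∧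
      (∀ k t, ‖deriv (ψ k) t‖ ≤ 1) ∧ ∀ t ∈ Set.Ioc (0 : ℝ) 1,
        Tendsto (fun k ↦ deriv (ψ k) t) atTop
          (𝓝 ((Set.Ioo ((1 - θ) / 2) ((1 + θ) / 2)).indicator 1 t - θ)) := by
  obtain ⟨χ, hχ, hper, h01, hlim⟩ := exists_periodic_tendsto_indicator hθ
  have := isProbabilityMeasure_restrict_Ioc_zero_one
  have hnorm (k : ℕ) (t : ℝ) : ‖χ k t‖ ≤ 1 := by
    rw [Real.norm_of_nonneg (h01 k t).1]
    exact (h01 k t).2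
  have hint (k : ℕ) : Integrable (χ k) (volume.restrict (Set.Ioc 0 1)) :=
    .of_bound (hχ k).continuous.aestronglyMeasurable 1 (.of_forall (hnorm k))
  let m (k : ℕ) : ℝ := ∫ t in Set.Ioc (0 : ℝ) 1, χ k t
  have hm01 (k : ℕ) : m k ∈ Set.Icc (0 : ℝ) 1 := by
    refine ⟨integral_nonneg fun t ↦ (h01 k t).1, ?_⟩
    simpa using integral_mono (hint k) (integrable_const 1) fun t ↦ (h01 k t).2
  have hm : Tendsto m atTop (𝓝 θ) := by
    have h := tendsto_integral_continuous_comp (ν := volume.restrict (Set.Ioc 0 1)) continuous_id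
      (fun k ↦ (hχ k).continuous.aestronglyMeasurable) (fun k ↦ .of_forall (hnorm k))
      ((ae_restrict_mem measurableSet_Ioc).mono hlim)
    have hθint := integral_comp_indicator_Ioo_sub hθ fun c ↦ c + θ
    simp only [sub_add_cancel, neg_add_cancel, mul_one, mul_zero, add_zero] at hθint
    simp only [id_eq, hθint] at h
    exact h
  have hmean (k : ℕ) : ∫ t in (0 : ℝ)..1, (χ k t - m k) = 0 := by
    rw [intervalIntegral.integral_of_le zero_le_one,
      integral_sub (hint k) (integrable_const _), integral_const]
    simp [m]
  choose ψ hψ hψper hψχ using fun k ↦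
    exists_contDiff_periodic_deriv_eq ((hχ k).sub contDiff_const)
      (fun t ↦ by simp only [hper k t]) (hmean k)
  refine ⟨ψ, hψ, hψper, fun k t ↦ ?_, fun t ht ↦ ?_⟩
  · rw [hψχ k, Real.norm_eq_abs, abs_le]
    exact ⟨by linarith [(h01 k t).1, (hm01 k).2], by linarith [(h01 k t).2, (hm01 k).1]⟩
  · simpa only [hψχ] using (hlim t ht).sub hm

end Profiles

section TestFunctions

variable {E V : Type*} [NormedAddCommGroup E] [NormedSpace ℝ E] [NormedAddCommGroup V]
  [NormedSpace ℝ V] {Ω : Opens E}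

/-- The product of a scalar test function with a smooth function, as a test function. -/
noncomputable def smulTestFunction (η : 𝓓(Ω, ℝ)) (f : E → V) (hf : ContDiff ℝ ∞ f) : 𝓓(Ω, V) where
  toFun x := η x • f x
  contDiff' := η.contDiff.smul hf
  hasCompactSupport' := η.hasCompactSupport.smul_right
  tsupport_subset' := (tsupport_smul_subset_left _ _).trans η.tsupport_subset

theorem fderiv_smulTestFunction (η : 𝓓(Ω, ℝ)) {f : E → V} (hf : ContDiff ℝ ∞ f) (x : E) :
    fderiv ℝ (smulTestFunction η f hf) x = η x • fderiv ℝ f x + (fderiv ℝ η x).smulRight (f x) :=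
  fderiv_fun_smul (η.contDiff.differentiable (by simp)).differentiableAt
    (hf.differentiable (by simp)).differentiableAt

theorem fderiv_smulTestFunction_const (η : 𝓓(Ω, ℝ)) (w : V) (x : E) :
    fderiv ℝ (smulTestFunction η (fun _ ↦ w) contDiff_const) x = (fderiv ℝ η x).smulRight w := by
  simp [fderiv_smulTestFunction]

theorem contDiff_testFunction_apply {ι : Type*} [Fintype ι] (v : 𝓓(Ω, ι → ℝ)) (i : ι) :
    ContDiff ℝ ∞ fun x ↦ v x i :=
  contDiff_pi.1 v.contDiff i

theorem hasCompactSupport_testFunction_apply {ι : Type*} [Fintype ι] (v : 𝓓(Ω, ι → ℝ)) (i : ι) :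
    HasCompactSupport fun x ↦ v x i :=
  v.hasCompactSupport.comp_left (g := fun z : ι → ℝ ↦ z i) rfl

theorem exists_pos_mul_norm_fderiv_le (η : 𝓓(Ω, ℝ)) {δ : ℝ} (hδ : 0 < δ) :
    ∃ ε > 0, ∀ x, ε * ‖fderiv ℝ η x‖ ≤ δ := by
  obtain ⟨R, hR⟩ := (η.hasCompactSupport.fderiv ℝ).exists_bound_of_continuous
    (η.contDiff.continuous_fderiv (by simp))
  have hR0 : 0 ≤ R := (norm_nonneg _).trans (hR 0)
  refine ⟨δ / (R + 1), by positivity, fun x ↦ ?_⟩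
  rw [div_mul_eq_mul_div, div_le_iff₀ (by positivity)]
  exact mul_le_mul_of_nonneg_left ((hR x).trans (by linarith)) hδ.le

theorem tsupport_smoothTransition_sub_one_subset {X : Type*} [TopologicalSpace X] {f : X → ℝ}
    (hf : Continuous f) (c : ℝ) :
    tsupport (fun x ↦ Real.smoothTransition (c * f x - 1)) ⊆ Function.support f := by
  have hsub : tsupport (fun x ↦ Real.smoothTransition (c * f x - 1)) ⊆ {x | 1 ≤ c * f x} := by
    refine closure_minimal (fun x hx ↦ ?_) (isClosed_le continuous_const (hf.const_mul c))
    by_contra h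
    exact hx (Real.smoothTransition.zero_of_nonpos (sub_nonpos.2 (not_le.1 h).le))
  intro x hx h0
  have h1 : 1 ≤ c * f x := hsub hx
  rw [h0, mul_zero] at h1
  exact absurd h1 (by norm_num)

theorem exists_testFunction_tendsto_one [FiniteDimensional ℝ E] (Ω : Opens E) :
    ∃ η : ℕ → 𝓓(Ω, ℝ), (∀ k x, η k x ∈ Set.Icc 0 1) ∧
      ∀ x ∈ Ω, Tendsto (fun k ↦ η k x) atTop (𝓝 1) := by
  obtain ⟨f, hf, hfs, hf0⟩ := Ω.isOpen.exists_contDiff_support_eq (n := ⊤)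
  let β (k : ℕ) : ContDiffBump (0 : E) := ⟨k + 1, k + 2, by positivity, by linarith⟩
  have hs (k : ℕ) : ContDiff ℝ ∞ fun x ↦ Real.smoothTransition (k * f x - 1) :=
    Real.smoothTransition.contDiff.comp (by fun_prop)
  refine ⟨fun k ↦ ⟨fun x ↦ β k x * Real.smoothTransition (k * f x - 1), (β k).contDiff.mul (hs k),
    (β k).hasCompactSupport.mul_right, (tsupport_mul_subset_right).trans ?_⟩,
    fun k x ↦ ⟨mul_nonneg (β k).nonneg (Real.smoothTransition.nonneg _),
      mul_le_one₀ (β k).le_one (Real.smoothTransition.nonneg _) (Real.smoothTransition.le_one _)⟩,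
    fun x hx ↦ ?_⟩
  · exact (tsupport_smoothTransition_sub_one_subset hfs.continuous k).trans hf.subset
  · have hx0 : 0 < f x :=
      (hf0 (Set.mem_range_self x)).1.lt_of_ne' (Function.mem_support.1 (hf.symm.subset hx))
    have hβ : ∀ᶠ k : ℕ in atTop, 1 = β k x := by
      filter_upwards [tendsto_natCast_atTop_atTop.eventually_ge_atTop ‖x‖] with k hk
      have hxk : x ∈ Metric.closedBall 0 (β k).rIn :=
        mem_closedBall_zero_iff.2 (hk.trans (by simp only [β]; linarith))
      exact ((β k).one_of_mem_closedBall hxk).symm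
    have hlim := tendsto_smoothTransition_natCast_mul_sub zero_le_one (f x)
    rw [Set.indicator_of_mem (Set.mem_Ioi.2 hx0)] at hlim
    simpa using (tendsto_const_nhds.congr' hβ).mul hlim

end TestFunctions

section Oscillation

variable {E : Type*} [NormedAddCommGroup E] [NormedSpace ℝ E] {Ω : Opens E}

/-- The gradient of the oscillating test function `η x * (ε * ψ (n x / ε))`, with the fast variable
`n x / ε` replaced by an independent variable `z.2`. -/
noncomputable def twoScaleGradient (η : 𝓓(Ω, ℝ)) (ψ : ℝ → ℝ) (n : StrongDual ℝ E) (ε : ℝ)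
    (z : E × ℝ) : StrongDual ℝ E :=
  (η z.1 * deriv ψ z.2) • n + ψ z.2 • ε • fderiv ℝ η z.1

theorem continuous_twoScaleGradient (η : 𝓓(Ω, ℝ)) {ψ : ℝ → ℝ} (hψ : ContDiff ℝ ∞ ψ)
    (n : StrongDual ℝ E) (ε : ℝ) : Continuous (twoScaleGradient η ψ n ε) := by
  have hη : Continuous (fderiv ℝ η) := η.contDiff.continuous_fderiv (by simp)
  have hψ' : Continuous (deriv ψ) := hψ.continuous_deriv (by simp)
  have hη0 : Continuous η := η.continuous
  have hψ0 : Continuous ψ := hψ.continuous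
  unfold twoScaleGradient
  fun_prop

theorem norm_twoScaleGradient_le {η : 𝓓(Ω, ℝ)} {ψ : ℝ → ℝ} (n : StrongDual ℝ E) {ε B B' δ : ℝ}
    (hη : ∀ x, η x ∈ Set.Icc 0 1) (hψ : ∀ t, ‖ψ t‖ ≤ B) (hψ' : ∀ t, ‖deriv ψ t‖ ≤ B')
    (hε : 0 < ε) (hδ : ∀ x, ε * ‖fderiv ℝ η x‖ ≤ δ) (z : E × ℝ) :
    ‖twoScaleGradient η ψ n ε z‖ ≤ B' * ‖n‖ + B * δ := by
  have hB : 0 ≤ B := (norm_nonneg _).trans (hψ 0)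
  have hη1 : ‖η z.1‖ ≤ 1 := by
    rw [Real.norm_of_nonneg (hη z.1).1]
    exact (hη z.1).2
  refine (norm_add_le _ _).trans (add_le_add ?_ ?_)
  · rw [norm_smul, norm_mul]
    gcongr
    exact (mul_le_of_le_one_left (norm_nonneg _) hη1).trans (hψ' _)
  · rw [norm_smul, norm_smul, Real.norm_of_nonneg hε.le]
    exact mul_le_mul (hψ _) (hδ _) (by positivity) hB

theorem fderiv_smulTestFunction_oscillation (η : 𝓓(Ω, ℝ)) {ψ : ℝ → ℝ} (hψ : ContDiff ℝ ∞ ψ)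
    (n : StrongDual ℝ E) {ε : ℝ} (hε : ε ≠ 0) (s : ℝ)
    (hosc : ContDiff ℝ ∞ fun x ↦ ε * ψ (ε⁻¹ * n x + s)) (x : E) :
    fderiv ℝ (smulTestFunction η (fun x ↦ ε * ψ (ε⁻¹ * n x + s)) hosc) x =
      twoScaleGradient η ψ n ε (x, ε⁻¹ * n x + s) := by
  have hψx : HasDerivAt ψ (deriv ψ (ε⁻¹ * n x + s)) (ε⁻¹ * n x + s) :=
    (hψ.differentiable (by simp)).differentiableAt.hasDerivAt
  have h : HasFDerivAt (fun x ↦ ε * ψ (ε⁻¹ * n x + s)) _ x :=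
    (hψx.comp_hasFDerivAt x ((n.hasFDerivAt.const_mul ε⁻¹).add_const s)).const_mul ε
  rw [fderiv_smulTestFunction, h.fderiv]
  ext y
  simp only [twoScaleGradient, add_apply, smul_apply,
    ContinuousLinearMap.smulRight_apply, smul_eq_mul]
  field_simp

variable [MeasurableSpace E] [BorelSpace E] [FiniteDimensional ℝ E] {μ : Measure E}
  [IsFiniteMeasure (μ.restrict Ω)] {q : StrongDual ℝ E → ℝ} {I : ℝ} {ψ : ℝ → ℝ}

theorem le_integral_twoScaleGradient (hq : Continuous q)
    (hI : ∀ φ : 𝓓(Ω, ℝ), I ≤ ∫ x in Ω, q (fderiv ℝ φ x) ∂μ) (n : StrongDual ℝ E)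
    (hψ : ContDiff ℝ ∞ ψ) (hper : Function.Periodic ψ 1) {ε : ℝ} (hε : ε ≠ 0) {η : 𝓓(Ω, ℝ)} {C : ℝ}
    (hC : ∀ z, ‖twoScaleGradient η ψ n ε z‖ ≤ C) :
    I ≤ ∫ z, q (twoScaleGradient η ψ n ε z)
      ∂((μ.restrict Ω).prod (volume.restrict (Set.Ioc 0 1))) := by
  obtain ⟨B, hB⟩ := (isCompact_closedBall (0 : StrongDual ℝ E) C).exists_bound_of_continuousOn
    hq.continuousOn
  have hqB (z : E × ℝ) : ‖q (twoScaleGradient η ψ n ε z)‖ ≤ B :=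
    hB _ (mem_closedBall_zero_iff.2 (hC z))
  have hcont : Continuous fun z ↦ q (twoScaleGradient η ψ n ε z) :=
    hq.comp (continuous_twoScaleGradient η hψ n ε)
  have hper' (x : E) : Function.Periodic (fun t ↦ q (twoScaleGradient η ψ n ε (x, t))) 1 := by
    intro t
    simp only [twoScaleGradient, hper t, periodic_deriv hper t]
  obtain ⟨s, hs⟩ := exists_integral_comp_add_le_of_periodic (ν := μ.restrict Ω) hcont.measurable
    hqB hper' (n.measurable.const_mul ε⁻¹)
  have hosc : ContDiff ℝ ∞ fun x ↦ ε * ψ (ε⁻¹ * n x + s) :=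
    contDiff_const.mul (hψ.comp (by fun_prop))
  refine (hI (smulTestFunction η _ hosc)).trans ?_
  simpa only [fderiv_smulTestFunction_oscillation η hψ n hε s hosc] using hs

theorem le_integral_deriv_smul (hq : Continuous q)
    (hI : ∀ φ : 𝓓(Ω, ℝ), I ≤ ∫ x in Ω, q (fderiv ℝ φ x) ∂μ) (n : StrongDual ℝ E)
    (hψ : ContDiff ℝ ∞ ψ) (hper : Function.Periodic ψ 1) :
    I ≤ μ.real Ω * ∫ t in Set.Ioc (0 : ℝ) 1, q (deriv ψ t • n) := by
  obtain ⟨B, hB⟩ := (hper.isBounded_of_continuous one_ne_zero hψ.continuous).exists_norm_le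
  obtain ⟨B', hB'⟩ := ((periodic_deriv hper).isBounded_of_continuous one_ne_zero
    (hψ.continuous_deriv (by simp))).exists_norm_le
  rw [Set.forall_mem_range] at hB hB'
  obtain ⟨η, hη, hη1⟩ := exists_testFunction_tendsto_one Ω
  choose ε hε hδ using fun k : ℕ ↦
    exists_pos_mul_norm_fderiv_le (η k) (Nat.one_div_pos_of_nat (α := ℝ) (n := k))
  have hC (k : ℕ) := norm_twoScaleGradient_le n (hη k) hB hB' (hε k) fun x ↦
    (hδ k x).trans (Nat.one_div_le_one_div k.zero_le)
  have hgrad (x : E) : Tendsto (fun k ↦ ε k • fderiv ℝ (η k) x) atTop (𝓝 0) := by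
    refine squeeze_zero_norm (fun k ↦ ?_) tendsto_one_div_add_atTop_nhds_zero_nat
    rw [norm_smul, Real.norm_of_nonneg (hε k).le]
    exact hδ k x
  have hlim : ∀ᵐ z ∂((μ.restrict Ω).prod (volume.restrict (Set.Ioc 0 1))),
      Tendsto (fun k ↦ twoScaleGradient (η k) ψ n (ε k) z) atTop (𝓝 (deriv ψ z.2 • n)) := by
    filter_upwards [Measure.quasiMeasurePreserving_fst.ae
      (ae_restrict_mem Ω.isOpen.measurableSet)] with z hz
    simpa only [twoScaleGradient, one_mul, smul_zero, add_zero] using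
      (((hη1 z.1 hz).mul_const _).smul_const n).add ((hgrad z.1).const_smul (ψ z.2))
  have hE := ge_of_tendsto' (tendsto_integral_continuous_comp hq
    (fun k ↦ (continuous_twoScaleGradient (η k) hψ n (ε k)).aestronglyMeasurable)
    (fun k ↦ .of_forall (hC k)) hlim) fun k ↦
      le_integral_twoScaleGradient hq hI n hψ hper (hε k).ne' (hC k)
  rwa [integral_fun_snd (fun t ↦ q (deriv ψ t • n)), measureReal_restrict_apply_univ,
    smul_eq_mul] at hE

theorem le_integral_laminate (hq : Continuous q)
    (hI : ∀ φ : 𝓓(Ω, ℝ), I ≤ ∫ x in Ω, q (fderiv ℝ φ x) ∂μ) (n : StrongDual ℝ E) {θ : ℝ}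
    (hθ : θ ∈ Set.Icc (0 : ℝ) 1) :
    I ≤ μ.real Ω * (θ * q ((1 - θ) • n) + (1 - θ) * q (-θ • n)) := by
  obtain ⟨ψ, hψ, hper, hbound, hlim⟩ := exists_periodic_tendsto_deriv hθ
  have hlim' : ∀ᵐ t ∂volume.restrict (Set.Ioc (0 : ℝ) 1),
      Tendsto (fun k ↦ deriv (ψ k) t • n) atTop
        (𝓝 (((Set.Ioo ((1 - θ) / 2) ((1 + θ) / 2)).indicator 1 t - θ) • n)) := by
    filter_upwards [ae_restrict_mem measurableSet_Ioc] with t ht using (hlim t ht).smul_const n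
  have hbound' (k : ℕ) (t : ℝ) : ‖deriv (ψ k) t • n‖ ≤ ‖n‖ := by
    rw [norm_smul]
    exact mul_le_of_le_one_left (norm_nonneg _) (hbound k t)
  have hcont (k : ℕ) : Continuous fun t ↦ deriv (ψ k) t • n :=
    ((hψ k).continuous_deriv (by simp)).smul continuous_const
  rw [← integral_comp_indicator_Ioo_sub hθ fun c ↦ q (c • n)]
  exact ge_of_tendsto' ((tendsto_integral_continuous_comp hq
    (fun k ↦ (hcont k).aestronglyMeasurable) (fun k ↦ .of_forall (hbound' k)) hlim').const_mul _)
    fun k ↦ le_integral_deriv_smul hq hI n (hψ k) (hper k)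

theorem le_integral_rankOne_laminate {V : Type*} [NormedAddCommGroup V] [NormedSpace ℝ V]
    {Q : (E →L[ℝ] V) → ℝ} (hQ : Continuous Q)
    (hI : ∀ v : 𝓓(Ω, V), I ≤ ∫ x in Ω, Q (fderiv ℝ v x) ∂μ) (n : StrongDual ℝ E) (w : V) {θ : ℝ}
    (hθ : θ ∈ Set.Icc (0 : ℝ) 1) :
    I ≤ μ.real Ω *
      (θ * Q ((1 - θ) • n.smulRight w) + (1 - θ) * Q (-θ • n.smulRight w)) := by
  have hsmul (c : ℝ) : c • n.smulRight w = (c • n).smulRight w := by ext; simp [mul_smul]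
  have hcont : Continuous fun p : StrongDual ℝ E ↦ p.smulRight w :=
    ((ContinuousLinearMap.smulRightL ℝ E V).flip w).continuous
  rw [hsmul, hsmul]
  refine le_integral_laminate (hQ.comp hcont) (fun φ ↦ ?_) n hθ
  simpa only [Function.comp_apply, fderiv_smulTestFunction_const] using
    hI (smulTestFunction φ (fun _ ↦ w) contDiff_const)

end Oscillation

section MatrixAlgebra

open Matrix

theorem frob2_eq_trace (A : Matrix (Fin 2) (Fin 2) ℝ) : frob2 A = (Aᵀ * A).trace := by
  simp only [frob2, trace, diag_apply, mul_apply, transpose_apply, ← pow_two]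
  exact Finset.sum_comm

theorem frob2_add (A B : Matrix (Fin 2) (Fin 2) ℝ) :
    frob2 (A + B) = frob2 A + 2 * (Aᵀ * B).trace + frob2 B := by
  have hsymm : (Bᵀ * A).trace = (Aᵀ * B).trace := by
    rw [← trace_transpose, transpose_mul, transpose_transpose]
  simp only [frob2_eq_trace, transpose_add, add_mul, mul_add, trace_add, hsymm]
  ring

theorem frob2_smul (c : ℝ) (A : Matrix (Fin 2) (Fin 2) ℝ) : frob2 (c • A) = c ^ 2 * frob2 A := by
  simp only [frob2, Matrix.smul_apply, smul_eq_mul, mul_pow, Finset.mul_sum]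

theorem continuous_frob2 : Continuous frob2 := by
  unfold frob2
  fun_prop

theorem frob2_mul_of_mul_transpose_eq_one {R : Matrix (Fin 2) (Fin 2) ℝ} (hR : R * Rᵀ = 1)
    (A : Matrix (Fin 2) (Fin 2) ℝ) : frob2 (A * R) = frob2 A := by
  rw [frob2_eq_trace, frob2_eq_trace, transpose_mul, Matrix.mul_assoc, trace_mul_comm,
    Matrix.mul_assoc, Matrix.mul_assoc, hR, Matrix.mul_one]

theorem frob2_vecMulVec (u ξ : Fin 2 → ℝ) :
    frob2 (vecMulVec u ξ) = (∑ i, u i ^ 2) * ∑ j, ξ j ^ 2 := by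
  simp only [frob2, vecMulVec_apply, mul_pow, Finset.sum_mul_sum]

end MatrixAlgebra

section WaveCone

open Matrix

/-- The values `‖aξ‖²` over the unit vectors `ξ`. The least of them is `h_div(a)`, the squared
distance of `a` to the wave cone of the divergence. -/
def unitImageSqNorms (a : Matrix (Fin 2) (Fin 2) ℝ) : Set ℝ :=
  {h | ∃ ξ : Fin 2 → ℝ, (∑ i, ξ i ^ 2) = 1 ∧ h = ∑ i, (a.mulVec ξ i) ^ 2}

theorem isCompact_setOf_sum_sq_eq_one {ι : Type*} [Fintype ι] :
    IsCompact {ξ : ι → ℝ | ∑ i, ξ i ^ 2 = 1} := by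
  refine Metric.isCompact_of_isClosed_isBounded
    (isClosed_eq (by fun_prop) continuous_const)
    (isBounded_iff_forall_norm_le.2 ⟨1, fun ξ hξ ↦ (pi_norm_le_iff_of_nonneg zero_le_one).2 ?_⟩)
  intro i
  rw [Real.norm_eq_abs, ← sq_le_one_iff_abs_le_one, ← Set.mem_ofPred.1 hξ]
  exact Finset.single_le_sum (fun j _ ↦ sq_nonneg (ξ j)) (Finset.mem_univ i)

theorem exists_isLeast_unitImageSqNorms (a : Matrix (Fin 2) (Fin 2) ℝ) :
    ∃ H, IsLeast (unitImageSqNorms a) H := by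
  have himage : unitImageSqNorms a =
      (fun ξ : Fin 2 → ℝ ↦ ∑ i, (a.mulVec ξ i) ^ 2) '' {ξ | ∑ i, ξ i ^ 2 = 1} := by
    ext h
    simp [unitImageSqNorms, eq_comm]
  rw [himage]
  refine (isCompact_setOf_sum_sq_eq_one.image ?_).exists_isLeast (Set.Nonempty.image _ ?_)
  · simp only [mulVec, dotProduct]
    fun_prop
  · exact ⟨![1, 0], by simp⟩

/-- The rotation `(ξ, Jξ)` with first column `ξ`. -/
def frameMatrix (ξ : Fin 2 → ℝ) : Matrix (Fin 2) (Fin 2) ℝ := !![ξ 0, -ξ 1; ξ 1, ξ 0]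

theorem frameMatrix_mul_transpose {ξ : Fin 2 → ℝ} (hξ : ∑ i, ξ i ^ 2 = 1) :
    frameMatrix ξ * (frameMatrix ξ)ᵀ = 1 := by
  rw [Fin.sum_univ_two] at hξ
  ext i j
  fin_cases i <;> fin_cases j <;> simp [frameMatrix, mul_apply, Fin.sum_univ_two] <;>
    linarith

theorem det_frameMatrix {ξ : Fin 2 → ℝ} (hξ : ∑ i, ξ i ^ 2 = 1) : (frameMatrix ξ).det = 1 := by
  rw [Fin.sum_univ_two] at hξ
  rw [frameMatrix, det_fin_two_of]
  linear_combination hξ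

theorem unitImageSqNorms_mul_subset (a : Matrix (Fin 2) (Fin 2) ℝ) {R : Matrix (Fin 2) (Fin 2) ℝ}
    (hR : R * Rᵀ = 1) : unitImageSqNorms (a * R) ⊆ unitImageSqNorms a := by
  rintro h ⟨ζ, hζ, rfl⟩
  refine ⟨R *ᵥ ζ, ?_, by rw [mulVec_mulVec]⟩
  have hdot (u : Fin 2 → ℝ) : ∑ i, u i ^ 2 = u ⬝ᵥ u := by simp only [dotProduct, pow_two]
  rw [← hζ, hdot, hdot, dotProduct_mulVec, vecMul_mulVec, mul_eq_one_comm.1 hR, vecMul_one]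

theorem cols_orthogonal_of_forall_le {B : Matrix (Fin 2) (Fin 2) ℝ}
    (hB : ∀ h ∈ unitImageSqNorms B, ∑ i, B i 0 ^ 2 ≤ h) :
    B 0 0 * B 0 1 + B 1 0 * B 1 1 = 0 := by
  let f (t : ℝ) : ℝ := ∑ i, (B i 0 * Real.cos t + B i 1 * Real.sin t) ^ 2
  have hmin : IsMinOn f Set.univ 0 := fun t _ ↦ by
    have h := hB _ ⟨![Real.cos t, Real.sin t], by simp, rfl⟩
    simpa [f, mulVec, dotProduct, Fin.sum_univ_two] using h
  have hderiv (i : Fin 2) : HasDerivAt (fun t ↦ (B i 0 * Real.cos t + B i 1 * Real.sin t) ^ 2)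
      (2 * (B i 0 * B i 1)) 0 := by
    refine ((((Real.hasDerivAt_cos 0).const_mul (B i 0)).fun_add
      ((Real.hasDerivAt_sin 0).const_mul (B i 1))).fun_pow 2).congr_deriv ?_
    simp [mul_assoc]
  have h0 := (hmin.isLocalMin Filter.univ_mem).hasDerivAt_eq_zero
    (HasDerivAt.fun_sum fun i _ ↦ hderiv i)
  rw [Fin.sum_univ_two] at h0
  linarith

theorem exists_sq_le_one_col_zero_eq_rotated_col_one {B : Matrix (Fin 2) (Fin 2) ℝ}
    (hB : ∀ h ∈ unitImageSqNorms B, ∑ i, B i 0 ^ 2 ≤ h) :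
    ∃ μ : ℝ, μ ^ 2 ≤ 1 ∧ B 0 0 = -μ * B 1 1 ∧ B 1 0 = μ * B 0 1 := by
  have horth := cols_orthogonal_of_forall_le hB
  have hle : B 0 0 ^ 2 + B 1 0 ^ 2 ≤ B 0 1 ^ 2 + B 1 1 ^ 2 := by
    simpa [mulVec, dotProduct, Fin.sum_univ_two] using hB _ ⟨![0, 1], by simp, rfl⟩
  rcases (add_nonneg (sq_nonneg (B 0 1)) (sq_nonneg (B 1 1))).eq_or_lt with hw | hw
  · rw [← hw] at hle
    exact ⟨0, by norm_num, by nlinarith, by nlinarith⟩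
  · set μ := (B 0 1 * B 1 0 - B 1 1 * B 0 0) / (B 0 1 ^ 2 + B 1 1 ^ 2) with hμ
    have h0 : B 0 0 = -μ * B 1 1 := by
      rw [hμ]
      field_simp
      linear_combination B 0 1 * horth
    have h1 : B 1 0 = μ * B 0 1 := by
      rw [hμ]
      field_simp
      linear_combination B 1 1 * horth
    refine ⟨μ, le_of_mul_le_mul_right ?_ hw, h0, h1⟩
    rw [h0, h1] at hle
    linarith

theorem det_add_sq_mul_le_frob2_sub {B : Matrix (Fin 2) (Fin 2) ℝ} {μ : ℝ} (hμ : μ ^ 2 ≤ 1)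
    (h0 : B 0 0 = -μ * B 1 1) (h1 : B 1 0 = μ * B 0 1) (K : Matrix (Fin 2) (Fin 2) ℝ) (τ : ℝ) :
    2 * μ * K.det + τ ^ 2 * ∑ i, B i 0 ^ 2 ≤ frob2 (K - τ • B) := by
  have hsq : frob2 (K - τ • B) - (2 * μ * K.det + τ ^ 2 * ∑ i, B i 0 ^ 2) =
      (K 0 0 - μ * (K 1 1 - τ * B 1 1)) ^ 2 + (K 1 0 + μ * (K 0 1 - τ * B 0 1)) ^ 2 +
        (1 - μ ^ 2) * ((K 0 1 - τ * B 0 1) ^ 2 + (K 1 1 - τ * B 1 1) ^ 2) := by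
    simp only [frob2, Fin.sum_univ_two, det_fin_two, Matrix.sub_apply, Matrix.smul_apply,
      smul_eq_mul, h0, h1]
    ring
  rw [← sub_nonneg, hsq]
  exact add_nonneg (by positivity) (mul_nonneg (sub_nonneg.2 hμ) (by positivity))

theorem exists_det_add_sq_mul_le_frob2_sub {a : Matrix (Fin 2) (Fin 2) ℝ} {H : ℝ}
    (hH : IsLeast (unitImageSqNorms a) H) :
    ∃ c : ℝ, ∀ (G : Matrix (Fin 2) (Fin 2) ℝ) (τ : ℝ),
      c * G.det + τ ^ 2 * H ≤ frob2 (G - τ • a) := by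
  obtain ⟨⟨ξ, hξ, hHξ⟩, hle⟩ := hH
  set R := frameMatrix ξ
  have hR : R * Rᵀ = 1 := frameMatrix_mul_transpose hξ
  have hcol : H = ∑ i, (a * R) i 0 ^ 2 := by
    simp [hHξ, R, frameMatrix, mulVec, dotProduct, mul_apply, Fin.sum_univ_two]
  obtain ⟨μ, hμ, h0, h1⟩ := exists_sq_le_one_col_zero_eq_rotated_col_one fun h hh ↦
    hcol ▸ hle (unitImageSqNorms_mul_subset a hR hh)
  refine ⟨2 * μ, fun G τ ↦ ?_⟩
  have h := det_add_sq_mul_le_frob2_sub hμ h0 h1 (G * R) τ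
  rwa [det_mul, det_frameMatrix hξ, mul_one, ← hcol, ← Matrix.smul_mul, ← Matrix.sub_mul,
    frob2_mul_of_mul_transpose_eq_one hR] at h

end WaveCone

section Relaxation

open Matrix

/-- The squared distance to the two wells `a₀` and `a₁`. -/
def wellDistSq (a₀ a₁ A : Matrix (Fin 2) (Fin 2) ℝ) : ℝ := min (frob2 (A - a₀)) (frob2 (A - a₁))

/-- The values `‖F - a_θ‖² + θ(1-θ)H`, `θ ∈ [0,1]`, whose minimum is the relaxed energy density
when `H = h_div(a₁ - a₀)`. -/
def relaxedEnergies (F a₀ a₁ : Matrix (Fin 2) (Fin 2) ℝ) (H : ℝ) : Set ℝ :=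
  {m | ∃ θ ∈ Set.Icc (0 : ℝ) 1, m = frob2 (F - ((1 - θ) • a₀ + θ • a₁)) + θ * (1 - θ) * H}

theorem continuous_wellDistSq (a₀ a₁ : Matrix (Fin 2) (Fin 2) ℝ) :
    Continuous (wellDistSq a₀ a₁) :=
  (continuous_frob2.comp (continuous_id.sub continuous_const)).min
    (continuous_frob2.comp (continuous_id.sub continuous_const))

theorem exists_isLeast_relaxedEnergies (F a₀ a₁ : Matrix (Fin 2) (Fin 2) ℝ) (H : ℝ) :
    ∃ M, IsLeast (relaxedEnergies F a₀ a₁ H) M := by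
  have himage : relaxedEnergies F a₀ a₁ H =
      (fun θ : ℝ ↦ frob2 (F - ((1 - θ) • a₀ + θ • a₁)) + θ * (1 - θ) * H) '' Set.Icc 0 1 := by
    ext m
    simp [relaxedEnergies, eq_comm]
  rw [himage]
  refine (isCompact_Icc.image ?_).exists_isLeast (Set.nonempty_Icc.2 zero_le_one |>.image _)
  exact (continuous_frob2.comp (by fun_prop)).add (by fun_prop)

theorem mul_deriv_nonneg_of_isMinOn {f : ℝ → ℝ} {f' x y : ℝ} {s : Set ℝ} (hs : Convex ℝ s)
    (hf : IsMinOn f s x) (hx : x ∈ s) (hy : y ∈ s) (hf' : HasDerivAt f f' x) :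
    0 ≤ (y - x) * f' := by
  simpa using hf.localize.hasFDerivWithinAt_nonneg hf'.hasDerivWithinAt.hasFDerivWithinAt
    (sub_mem_posTangentConeAt_of_segment_subset (hs.segment_subset hx hy))

theorem frob2_sub_segment (F a₀ a₁ : Matrix (Fin 2) (Fin 2) ℝ) (θ χ : ℝ) :
    frob2 (F - ((1 - χ) • a₀ + χ • a₁)) =
      frob2 (F - ((1 - θ) • a₀ + θ • a₁)) -
        2 * (χ - θ) * ((F - ((1 - θ) • a₀ + θ • a₁))ᵀ * (a₁ - a₀)).trace +
        (χ - θ) ^ 2 * frob2 (a₁ - a₀) := by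
  have hsplit : F - ((1 - χ) • a₀ + χ • a₁) =
      F - ((1 - θ) • a₀ + θ • a₁) + (-(χ - θ)) • (a₁ - a₀) := by module
  rw [hsplit, frob2_add, frob2_smul, Matrix.mul_smul, trace_smul, smul_eq_mul]
  ring

theorem mul_relaxedEnergy_deriv_nonneg {F a₀ a₁ : Matrix (Fin 2) (Fin 2) ℝ} {H θ χ : ℝ}
    (hθ : θ ∈ Set.Icc (0 : ℝ) 1) (hχ : χ ∈ Set.Icc (0 : ℝ) 1)
    (hmin : ∀ m ∈ relaxedEnergies F a₀ a₁ H,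
      frob2 (F - ((1 - θ) • a₀ + θ • a₁)) + θ * (1 - θ) * H ≤ m) :
    0 ≤ (χ - θ) * ((1 - 2 * θ) * H -
      2 * ((F - ((1 - θ) • a₀ + θ • a₁))ᵀ * (a₁ - a₀)).trace) := by
  refine mul_deriv_nonneg_of_isMinOn (convex_Icc 0 1)
    (f := fun χ ↦ frob2 (F - ((1 - χ) • a₀ + χ • a₁)) + χ * (1 - χ) * H)
    (fun t ht ↦ hmin _ ⟨t, ht, rfl⟩) hθ hχ ?_
  rw [funext fun χ ↦ congrArg (· + χ * (1 - χ) * H) (frob2_sub_segment F a₀ a₁ θ χ)]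
  have hid := hasDerivAt_id' θ
  have hdist := hid.sub_const θ
  refine (((((hdist.const_mul 2).mul_const _).const_sub _).fun_add
    ((hdist.fun_pow 2).mul_const _)).fun_add
      ((hid.fun_mul (hid.const_sub 1)).mul_const H)).congr_deriv ?_
  simp only [sub_self]
  ring

theorem exists_add_trace_add_det_le_wellDistSq {F a₀ a₁ : Matrix (Fin 2) (Fin 2) ℝ} {H M : ℝ}
    (hH : IsLeast (unitImageSqNorms (a₁ - a₀)) H) (hM : IsLeast (relaxedEnergies F a₀ a₁ H) M) :
    ∃ (C : Matrix (Fin 2) (Fin 2) ℝ) (c : ℝ), ∀ G,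
      M + (C * G).trace + c * G.det ≤ wellDistSq a₀ a₁ (F + G) := by
  obtain ⟨c, hc⟩ := exists_det_add_sq_mul_le_frob2_sub hH
  obtain ⟨⟨θ, hθ, rfl⟩, hmin⟩ := hM
  set D := F - ((1 - θ) • a₀ + θ • a₁) with hD
  refine ⟨2 • Dᵀ, c, fun G ↦ ?_⟩
  have hwell {χ : ℝ} (hχ : χ ∈ Set.Icc (0 : ℝ) 1) (hχ2 : χ ^ 2 = χ) :
      frob2 D + θ * (1 - θ) * H + (2 • Dᵀ * G).trace + c * G.det ≤
        frob2 (F + G - ((1 - χ) • a₀ + χ • a₁)) := by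
    have hsplit : F + G - ((1 - χ) • a₀ + χ • a₁) = D + (G - (χ - θ) • (a₁ - a₀)) := by
      rw [hD]
      module
    have hfirst := mul_relaxedEnergy_deriv_nonneg hθ hχ hmin
    rw [hsplit, frob2_add, Matrix.mul_sub, trace_sub, Matrix.mul_smul, trace_smul, smul_eq_mul,
      two_smul, Matrix.add_mul, trace_add]
    rw [← hD] at hfirst
    linear_combination hc G (χ - θ) + hfirst - H * hχ2
  refine le_min ?_ ?_
  · simpa only [sub_zero, one_smul, zero_smul, add_zero] using
      hwell (χ := 0) (by norm_num) (by norm_num)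
  · simpa only [sub_self, one_smul, zero_smul, zero_add] using
      hwell (χ := 1) (by norm_num) (by norm_num)

theorem wellDistSq_laminate_le (F a₀ a₁ P : Matrix (Fin 2) (Fin 2) ℝ) {θ : ℝ}
    (hθ : θ ∈ Set.Icc (0 : ℝ) 1) :
    θ * wellDistSq a₀ a₁ (F + (1 - θ) • (a₁ - a₀ - P)) +
        (1 - θ) * wellDistSq a₀ a₁ (F + -θ • (a₁ - a₀ - P)) ≤
      frob2 (F - ((1 - θ) • a₀ + θ • a₁)) + θ * (1 - θ) * frob2 P := by
  set D := F - ((1 - θ) • a₀ + θ • a₁) with hD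
  have h₁ : F + (1 - θ) • (a₁ - a₀ - P) - a₁ = D + (-(1 - θ)) • P := by
    rw [hD]
    module
  have h₀ : F + -θ • (a₁ - a₀ - P) - a₀ = D + θ • P := by
    rw [hD]
    module
  calc
    _ ≤ θ * frob2 (D + (-(1 - θ)) • P) + (1 - θ) * frob2 (D + θ • P) := by
      rw [← h₀, ← h₁]
      exact add_le_add (mul_le_mul_of_nonneg_left (min_le_right _ _) hθ.1)
        (mul_le_mul_of_nonneg_left (min_le_left _ _) (sub_nonneg.2 hθ.2))
    _ = _ := by
      simp only [frob2_add, frob2_smul, Matrix.mul_smul, trace_smul, smul_eq_mul]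
      ring

end Relaxation

section NullLagrangians

variable {E V : Type*} [NormedAddCommGroup E] [NormedSpace ℝ E] [FiniteDimensional ℝ E]
  [MeasurableSpace E] [BorelSpace E] [NormedAddCommGroup V] [NormedSpace ℝ V]
  {μ : Measure E} [μ.IsAddHaarMeasure]

theorem integral_fderiv_apply_eq_zero {f : E → V} (hf : ContDiff ℝ 1 f)
    (hc : HasCompactSupport f) (e : E) : ∫ x, fderiv ℝ f x e ∂μ = 0 := by
  have hcont : Continuous fun x ↦ fderiv ℝ f x e :=
    (hf.continuous_fderiv one_ne_zero).clm_apply continuous_const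
  have h := integral_smul_fderiv_eq_neg_fderiv_smul_of_integrable (𝕜 := ℝ) (μ := μ)
    (f := fun _ ↦ (1 : ℝ)) (g := f) (v := e) (by simp)
    (by simpa using hcont.integrable_of_hasCompactSupport (hc.fderiv_apply ℝ e))
    (by simpa using hf.continuous.integrable_of_hasCompactSupport hc)
    (fun _ _ ↦ differentiableAt_const _)
    fun _ _ ↦ (hf.differentiable one_ne_zero).differentiableAt
  simpa using h

theorem integral_mul_fderiv_fderiv_eq_neg {f g : E → ℝ} (hf : ContDiff ℝ 1 f)
    (hc : HasCompactSupport f) (hg : ContDiff ℝ 2 g) (e₁ e₂ : E) :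
    ∫ x, f x * fderiv ℝ (fderiv ℝ g) x e₁ e₂ ∂μ =
      -∫ x, fderiv ℝ f x e₁ * fderiv ℝ g x e₂ ∂μ := by
  have hg' : ContDiff ℝ 1 (fderiv ℝ g) := hg.fderiv_right le_rfl
  have hfe : Continuous fun x ↦ fderiv ℝ f x e₁ :=
    (hf.continuous_fderiv one_ne_zero).clm_apply continuous_const
  have hge : ContDiff ℝ 1 fun x ↦ fderiv ℝ g x e₂ := hg'.clm_apply contDiff_const
  have hgee : Continuous fun x ↦ fderiv ℝ (fun y ↦ fderiv ℝ g y e₂) x e₁ :=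
    (hge.continuous_fderiv one_ne_zero).clm_apply continuous_const
  have hderiv (x : E) :
      fderiv ℝ (fderiv ℝ g) x e₁ e₂ = fderiv ℝ (fun y ↦ fderiv ℝ g y e₂) x e₁ := by
    rw [fderiv_clm_apply (hg'.differentiable one_ne_zero).differentiableAt
      (differentiableAt_const _)]
    simp
  simp_rw [hderiv]
  exact integral_mul_fderiv_eq_neg_fderiv_mul_of_integrable
    ((hfe.mul hge.continuous).integrable_of_hasCompactSupport (hc.fderiv_apply ℝ e₁).mul_right)
    ((hf.continuous.mul hgee).integrable_of_hasCompactSupport hc.mul_right)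
    ((hf.continuous.mul hge.continuous).integrable_of_hasCompactSupport hc.mul_right)
    (fun _ _ ↦ (hf.differentiable one_ne_zero).differentiableAt)
    fun _ _ ↦ (hge.differentiable one_ne_zero).differentiableAt

theorem integral_fderiv_mul_fderiv_comm {f g : E → ℝ} (hf : ContDiff ℝ 1 f)
    (hc : HasCompactSupport f) (hg : ContDiff ℝ 2 g) (e₁ e₂ : E) :
    ∫ x, fderiv ℝ f x e₁ * fderiv ℝ g x e₂ ∂μ = ∫ x, fderiv ℝ f x e₂ * fderiv ℝ g x e₁ ∂μ := by
  have hsymm (x : E) : fderiv ℝ (fderiv ℝ g) x e₁ e₂ = fderiv ℝ (fderiv ℝ g) x e₂ e₁ :=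
    (hg.contDiffAt.isSymmSndFDerivAt (by simp)).eq e₁ e₂
  rw [← neg_inj, ← integral_mul_fderiv_fderiv_eq_neg hf hc hg,
    ← integral_mul_fderiv_fderiv_eq_neg hf hc hg]
  simp only [hsymm]

end NullLagrangians

section Jacobian

open Matrix

theorem jacobian_eq_toMatrix' (v : (Fin 2 → ℝ) → (Fin 2 → ℝ)) (x : Fin 2 → ℝ) :
    jacobian v x = LinearMap.toMatrix' (fderiv ℝ v x).toLinearMap := by
  ext i j
  simp [jacobian, LinearMap.toMatrix'_apply]

theorem continuous_toMatrix'_toLinearMap {m n : Type*} [Fintype n] [DecidableEq n] :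
    Continuous fun p : (n → ℝ) →L[ℝ] (m → ℝ) ↦ LinearMap.toMatrix' p.toLinearMap :=
  continuous_matrix fun i j ↦
    (continuous_apply i).comp (continuous_eval_const (F := (n → ℝ) →L[ℝ] (m → ℝ)) (Pi.single j 1))

theorem jacobian_apply {v : (Fin 2 → ℝ) → (Fin 2 → ℝ)} {x : Fin 2 → ℝ}
    (hv : DifferentiableAt ℝ v x) (i j : Fin 2) :
    jacobian v x i j = fderiv ℝ (fun y ↦ v y i) x (Pi.single j 1) := by
  rw [(hasFDerivAt_pi'.1 hv.hasFDerivAt i).fderiv]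
  rfl

variable {Ω : Opens (Fin 2 → ℝ)} (v : 𝓓(Ω, Fin 2 → ℝ))

theorem continuous_jacobian : Continuous (jacobian v) := by
  rw [funext (jacobian_eq_toMatrix' v)]
  exact continuous_toMatrix'_toLinearMap.comp (v.contDiff.continuous_fderiv (by simp))

theorem support_jacobian_subset : Function.support (jacobian v) ⊆ tsupport v := by
  refine fun x hx ↦ support_fderiv_subset ℝ fun h ↦ hx ?_
  rw [jacobian_eq_toMatrix', h, ContinuousLinearMap.toLinearMap_zero, map_zero]

theorem setIntegral_comp_jacobian {f : Matrix (Fin 2) (Fin 2) ℝ → ℝ} (hf : f 0 = 0) :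
    ∫ x in Ω, f (jacobian v x) = ∫ x, f (jacobian v x) := by
  refine setIntegral_eq_integral_of_forall_compl_eq_zero fun x hx ↦ ?_
  rw [Function.notMem_support.1 fun h ↦ hx (v.tsupport_subset (support_jacobian_subset v h)), hf]

theorem integrableOn_comp_jacobian [IsFiniteMeasure (volume.restrict (Ω : Set (Fin 2 → ℝ)))]
    {f : Matrix (Fin 2) (Fin 2) ℝ → ℝ} (hf : Continuous f) :
    IntegrableOn (fun x ↦ f (jacobian v x)) Ω := by
  have hsupp : HasCompactSupport (jacobian v) :=
    v.hasCompactSupport.mono' (support_jacobian_subset v)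
  obtain ⟨B, hB⟩ := ((hsupp.isCompact_range (continuous_jacobian v)).image hf).isBounded
    |>.exists_norm_le
  exact Integrable.of_bound (hf.comp (continuous_jacobian v)).aestronglyMeasurable B
    (.of_forall fun x ↦ hB _ ⟨_, ⟨x, rfl⟩, rfl⟩)

theorem integral_jacobian_apply (i j : Fin 2) : ∫ x in Ω, jacobian v x i j = 0 := by
  rw [setIntegral_comp_jacobian v (f := fun A ↦ A i j) rfl]
  simp_rw [jacobian_apply (v.contDiff.differentiable (by simp)).differentiableAt]
  exact integral_fderiv_apply_eq_zero ((contDiff_testFunction_apply v i).of_le (by simp))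
    (hasCompactSupport_testFunction_apply v i) _

theorem integral_trace_mul_jacobian [IsFiniteMeasure (volume.restrict (Ω : Set (Fin 2 → ℝ)))]
    (C : Matrix (Fin 2) (Fin 2) ℝ) : ∫ x in Ω, (C * jacobian v x).trace = 0 := by
  have hint (i j : Fin 2) : IntegrableOn (fun x ↦ C i j * jacobian v x j i) Ω :=
    integrableOn_comp_jacobian v (f := fun A ↦ C i j * A j i) (by fun_prop)
  simp only [trace, diag_apply, mul_apply]
  rw [integral_finsetSum _ fun i _ ↦ integrable_finsetSum _ fun j _ ↦ hint i j]
  refine Finset.sum_eq_zero fun i _ ↦ ?_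
  rw [integral_finsetSum _ fun j _ ↦ hint i j]
  simp only [integral_const_mul, integral_jacobian_apply, mul_zero, Finset.sum_const_zero]

theorem integral_det_jacobian [IsFiniteMeasure (volume.restrict (Ω : Set (Fin 2 → ℝ)))] :
    ∫ x in Ω, (jacobian v x).det = 0 := by
  have hcomm : ∫ x in Ω, jacobian v x 0 0 * jacobian v x 1 1 =
      ∫ x in Ω, jacobian v x 0 1 * jacobian v x 1 0 := by
    rw [setIntegral_comp_jacobian v (f := fun A ↦ A 0 0 * A 1 1) (by simp),
      setIntegral_comp_jacobian v (f := fun A ↦ A 0 1 * A 1 0) (by simp)]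
    simp_rw [jacobian_apply (v.contDiff.differentiable (by simp)).differentiableAt]
    exact integral_fderiv_mul_fderiv_comm
      ((contDiff_testFunction_apply v 0).of_le (by simp))
      (hasCompactSupport_testFunction_apply v 0)
      ((contDiff_testFunction_apply v 1).of_le (WithTop.coe_le_coe.2 le_top)) _ _
  simp only [det_fin_two]
  rw [integral_sub (integrableOn_comp_jacobian v (f := fun A ↦ A 0 0 * A 1 1) (by fun_prop))
    (integrableOn_comp_jacobian v (f := fun A ↦ A 0 1 * A 1 0) (by fun_prop)), hcomm, sub_self]

end Jacobian

section TwoWellEnergy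

open Matrix

variable {Ω : Opens (Fin 2 → ℝ)} [IsFiniteMeasure (volume.restrict (Ω : Set (Fin 2 → ℝ)))]
  {F a₀ a₁ : Matrix (Fin 2) (Fin 2) ℝ} {H M : ℝ}

theorem mul_le_integral_wellDistSq (hH : IsLeast (unitImageSqNorms (a₁ - a₀)) H)
    (hM : IsLeast (relaxedEnergies F a₀ a₁ H) M) (J : Matrix (Fin 2) (Fin 2) ℝ)
    (v : 𝓓(Ω, Fin 2 → ℝ)) :
    volume.real (Ω : Set (Fin 2 → ℝ)) * M ≤
      ∫ x in Ω, wellDistSq a₀ a₁ (F + jacobian v x * J) := by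
  obtain ⟨C, c, hle⟩ := exists_add_trace_add_det_le_wellDistSq hH hM
  have hpoint (x : Fin 2 → ℝ) :
      M + (J * C * jacobian v x).trace + c * J.det * (jacobian v x).det ≤
        wellDistSq a₀ a₁ (F + jacobian v x * J) := by
    refine (hle (jacobian v x * J)).trans' (le_of_eq ?_)
    rw [det_mul, ← Matrix.mul_assoc, trace_mul_comm (C * jacobian v x), ← Matrix.mul_assoc]
    ring
  have htrace : IntegrableOn (fun x ↦ (J * C * jacobian v x).trace) Ω :=
    integrableOn_comp_jacobian v (f := fun A ↦ (J * C * A).trace) (by fun_prop)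
  have hMtrace : IntegrableOn (fun x ↦ M + (J * C * jacobian v x).trace) Ω :=
    (integrable_const M).add htrace
  have hdet : IntegrableOn (fun x ↦ c * J.det * (jacobian v x).det) Ω :=
    integrableOn_comp_jacobian v (f := fun A ↦ c * J.det * A.det) (by fun_prop)
  have hwell : IntegrableOn (fun x ↦ wellDistSq a₀ a₁ (F + jacobian v x * J)) Ω :=
    integrableOn_comp_jacobian v (f := fun A ↦ wellDistSq a₀ a₁ (F + A * J))
      ((continuous_wellDistSq a₀ a₁).comp (by fun_prop))
  calc
    _ = ∫ x in Ω, (M + (J * C * jacobian v x).trace + c * J.det * (jacobian v x).det) := by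
      rw [integral_add hMtrace hdet,
        integral_add (integrable_const M) htrace, integral_const_mul, integral_det_jacobian,
        integral_trace_mul_jacobian, setIntegral_const, smul_eq_mul, mul_zero, add_zero, add_zero]
    _ ≤ _ := integral_mono (hMtrace.add hdet) hwell hpoint

theorem exists_toMatrix'_smulRight_mul_rotation (a : Matrix (Fin 2) (Fin 2) ℝ) {ξ : Fin 2 → ℝ}
    (hξ : ∑ i, ξ i ^ 2 = 1) :
    ∃ (n : StrongDual ℝ (Fin 2 → ℝ)) (w : Fin 2 → ℝ),
      LinearMap.toMatrix' (n.smulRight w).toLinearMap * !![0, -1; 1, 0] =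
        a - vecMulVec (a *ᵥ ξ) ξ := by
  rw [Fin.sum_univ_two] at hξ
  set ζ : Fin 2 → ℝ := ![-ξ 1, ξ 0]
  have hframe : vecMulVec ζ ζ = 1 - vecMulVec ξ ξ := by
    ext i j
    fin_cases i <;> fin_cases j <;> simp [ζ, vecMulVec_apply] <;> linarith
  refine ⟨-∑ i, ξ i • ContinuousLinearMap.proj i, a *ᵥ ζ, ?_⟩
  trans vecMulVec (a *ᵥ ζ) ζ
  · ext i j
    fin_cases j <;> simp [ζ, mul_apply, LinearMap.toMatrix'_apply, vecMulVec_apply, mul_comm]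
  · rw [← mul_vecMulVec, hframe, Matrix.mul_sub, Matrix.mul_one, mul_vecMulVec]

theorem le_mul_of_forall_le_integral_wellDistSq (hH : H ∈ unitImageSqNorms (a₁ - a₀))
    (hM : M ∈ relaxedEnergies F a₀ a₁ H) {I : ℝ}
    (hI : ∀ v : 𝓓(Ω, Fin 2 → ℝ),
      I ≤ ∫ x in Ω, wellDistSq a₀ a₁ (F + jacobian v x * !![0, -1; 1, 0])) :
    I ≤ volume.real (Ω : Set (Fin 2 → ℝ)) * M := by
  obtain ⟨ξ, hξ, rfl⟩ := hH
  obtain ⟨θ, hθ, rfl⟩ := hM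
  obtain ⟨n, w, hnw⟩ := exists_toMatrix'_smulRight_mul_rotation (a₁ - a₀) hξ
  let Q (p : (Fin 2 → ℝ) →L[ℝ] (Fin 2 → ℝ)) : ℝ :=
    wellDistSq a₀ a₁ (F + LinearMap.toMatrix' p.toLinearMap * !![0, -1; 1, 0])
  have hQ : Continuous Q := (continuous_wellDistSq a₀ a₁).comp
    (continuous_const.add (continuous_toMatrix'_toLinearMap.matrix_mul continuous_const))
  have hQsmul (c : ℝ) : Q (c • n.smulRight w) =
      wellDistSq a₀ a₁ (F + c • (a₁ - a₀ - vecMulVec ((a₁ - a₀) *ᵥ ξ) ξ)) := by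
    simp only [Q, ContinuousLinearMap.toLinearMap_smul, map_smul, Matrix.smul_mul, hnw]
  simp only [jacobian_eq_toMatrix'] at hI
  refine (le_integral_rankOne_laminate hQ hI n w hθ).trans ?_
  have hle := wellDistSq_laminate_le F a₀ a₁ (vecMulVec ((a₁ - a₀) *ᵥ ξ) ξ) hθ
  rw [frob2_vecMulVec, hξ, mul_one] at hle
  rw [hQsmul, hQsmul]
  exact mul_le_mul_of_nonneg_left hle measureReal_nonneg

theorem isGLB_range_integral_wellDistSq (hH : IsLeast (unitImageSqNorms (a₁ - a₀)) H)
    (hM : IsLeast (relaxedEnergies F a₀ a₁ H) M) :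
    IsGLB (Set.range fun v : 𝓓(Ω, Fin 2 → ℝ) ↦
        ∫ x in Ω, wellDistSq a₀ a₁ (F + jacobian v x * !![0, -1; 1, 0]))
      (volume.real (Ω : Set (Fin 2 → ℝ)) * M) :=
  ⟨Set.forall_mem_range.2 fun v ↦ mul_le_integral_wellDistSq hH hM _ v,
    fun _ hI ↦ le_mul_of_forall_le_integral_wellDistSq hH.1 hM.1 (Set.forall_mem_range.1 hI)⟩

end TwoWellEnergy

theorem statement2_general
    (Ω : Set (Fin 2 → ℝ)) (hΩopen : IsOpen Ω) (hΩfin : volume Ω ≠ ⊤)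
    (J : Matrix (Fin 2) (Fin 2) ℝ) (hJ : J = !![0, -1; 1, 0])
    (F a₀ a₁ : Matrix (Fin 2) (Fin 2) ℝ) :
    ∃ H M : ℝ,
      IsLeast {h : ℝ | ∃ ξ : Fin 2 → ℝ, (∑ i, ξ i ^ 2) = 1 ∧
        h = ∑ i, ((a₁ - a₀).mulVec ξ i) ^ 2} H ∧
      IsLeast {m : ℝ | ∃ θ ∈ Set.Icc (0 : ℝ) 1,
        m = frob2 (F - ((1 - θ) • a₀ + θ • a₁)) + θ * (1 - θ) * H} M ∧
      sInf {e : ℝ | ∃ v : (Fin 2 → ℝ) → (Fin 2 → ℝ),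
          ContDiff ℝ (⊤ : ℕ∞) v ∧ HasCompactSupport v ∧ tsupport v ⊆ Ω ∧
          e = ∫ x in Ω,
            min (frob2 (F + jacobian v x * J - a₀)) (frob2 (F + jacobian v x * J - a₁))}
        = (volume Ω).toReal * M := by
  subst hJ
  obtain ⟨H, hH⟩ := exists_isLeast_unitImageSqNorms (a₁ - a₀)
  obtain ⟨M, hM⟩ := exists_isLeast_relaxedEnergies F a₀ a₁ H
  lift Ω to Opens (Fin 2 → ℝ) using hΩopen
  have : IsFiniteMeasure (volume.restrict (Ω : Set (Fin 2 → ℝ))) :=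
    isFiniteMeasure_restrict.2 hΩfin
  refine ⟨H, M, hH, hM, ?_⟩
  rw [← measureReal_def, ← (isGLB_range_integral_wellDistSq hH hM).csInf_eq (Set.range_nonempty _)]
  congr 1
  ext e
  constructor
  · rintro ⟨v, hv, hvc, hvs, rfl⟩
    exact ⟨⟨v, hv, hvc, hvs⟩, rfl⟩
  · rintro ⟨v, rfl⟩
    exact ⟨v, v.contDiff, v.hasCompactSupport, v.tsupport_subset, rfl⟩

/-- Relaxation formula for the divergence-free two-well energy in two dimensions,
written via the potential `Dv · J`. -/
theorem statement2
    (Ω : Set (Fin 2 → ℝ)) (hΩopen : IsOpen Ω) (hΩne : Ω.Nonempty)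
    (hΩbdd : Bornology.IsBounded Ω)
    (J : Matrix (Fin 2) (Fin 2) ℝ) (hJ : J = !![0, -1; 1, 0])
    (F a₀ a₁ : Matrix (Fin 2) (Fin 2) ℝ) (hwells : a₀ ≠ a₁) :
    ∃ H M : ℝ,
      -- `H = min_{ξ ∈ S¹} ‖aξ‖²`, attained
      IsLeast {h : ℝ | ∃ ξ : Fin 2 → ℝ, (∑ i, ξ i ^ 2) = 1 ∧
        h = ∑ i, ((a₁ - a₀).mulVec ξ i) ^ 2} H ∧
      -- `M = min_{θ ∈ [0,1]} (‖F - a_θ‖² + θ(1-θ) H)`, attained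
      IsLeast {m : ℝ | ∃ θ ∈ Set.Icc (0 : ℝ) 1,
        m = frob2 (F - ((1 - θ) • a₀ + θ • a₁)) + θ * (1 - θ) * H} M ∧
      -- the infimum of the elastic energy over divergence-free fields `F + Dv·J`
      sInf {e : ℝ | ∃ v : (Fin 2 → ℝ) → (Fin 2 → ℝ),
          ContDiff ℝ (⊤ : ℕ∞) v ∧ HasCompactSupport v ∧ tsupport v ⊆ Ω ∧
          e = ∫ x in Ω,
            min (frob2 (F + jacobian v x * J - a₀)) (frob2 (F + jacobian v x * J - a₁))}
        = (volume Ω).toReal * M :=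
  statement2_general Ω hΩopen hΩbdd.measure_lt_top.ne J hJ F a₀ a₁
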